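/- arXiv:2102.03871 — 3 statements merged into one kernel-verified Lean document; each statement's English description precedes it below -/
import Mathlib

section
/- Let ω be a non-quasianalytic concave weight function and let f : [0,∞) → [0,∞) be any function satisfying ω(t) = o(f(t)) as t → ∞. Then there exists a non-quasianalytic concave weight function ω̃ satisfying ω(t) = o(ω̃(t)) and ω̃(t) = o(f(t)) as t → ∞. -/
open Filter Set Asymptotics MeasureTheory

noncomputable section

/-- `M` is a weight sequence: `M 0 = 1`, positive, `M 1 ≥ 1`, log-convex and
`M k ^ (1/k) → ∞`. -/
def IsWeightSeq (M : ℕ → ℝ) : Prop :=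
  M 0 = 1 ∧ (∀ k, 0 < M k) ∧ 1 ≤ M 1 ∧
    (∀ k : ℕ, 1 ≤ k → M k ^ 2 ≤ M (k - 1) * M (k + 1)) ∧
    Tendsto (fun k : ℕ => M k ^ (1 / (k : ℝ))) atTop atTop

/-- The sequence `m k = M k / k!`. -/
def mseq (M : ℕ → ℝ) : ℕ → ℝ := fun k => M k / (Nat.factorial k : ℝ)

/-- Log-convexity of a sequence. -/
def LogConvexSeq (m : ℕ → ℝ) : Prop := ∀ k : ℕ, 1 ≤ k → m k ^ 2 ≤ m (k - 1) * m (k + 1)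

/-- `m k ^ (1/k) → ∞`. -/
def RootTendsToInfty (m : ℕ → ℝ) : Prop :=
  Tendsto (fun k : ℕ => m k ^ (1 / (k : ℝ))) atTop atTop

/-- Moderate growth of a sequence. -/
def ModerateGrowth (M : ℕ → ℝ) : Prop :=
  ∃ C : ℝ, 0 < C ∧ ∀ j k : ℕ, M (j + k) ≤ C ^ (j + k) * M j * M k

/-- Derivation closedness of a sequence. -/
def DerivClosed (M : ℕ → ℝ) : Prop :=
  ∃ C : ℝ, 0 < C ∧ ∀ k : ℕ, M (k + 1) ≤ C ^ (k + 1) * M k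

/-- Non-quasianalyticity: `∑_{k≥1} M (k-1) / M k = ∑_{k≥1} 1/μ_k < ∞`. -/
def NonQuasianalytic (M : ℕ → ℝ) : Prop := Summable fun k : ℕ => M k / M (k + 1)

/-- Quasianalyticity: `∑_{k≥1} 1/μ_k = ∞`. -/
def Quasianalytic (M : ℕ → ℝ) : Prop := ¬ NonQuasianalytic M

/-- The associated function `h_m (t) = inf_k m k * t ^ k`. -/
def hFun (m : ℕ → ℝ) (t : ℝ) : ℝ := ⨅ k : ℕ, m k * t ^ k

/-- `Γ̄_m (t) = min {k | h_m t = m k * t ^ k}`. -/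
def GammaBar (m : ℕ → ℝ) (t : ℝ) : ℕ := sInf {k : ℕ | hFun m t = m k * t ^ k}

/-- `Γ̲_m (t) = min {k | m (k+1) / m k ≥ 1 / t}`. -/
def GammaLow (m : ℕ → ℝ) (t : ℝ) : ℕ := sInf {k : ℕ | 1 / t ≤ m (k + 1) / m k}

/-- The set whose supremum is `mg (M, N)`. -/
def mgSet (M N : ℕ → ℝ) : Set ℝ :=
  {x | ∃ j k : ℕ, 1 ≤ j + k ∧ x = (M (j + k) / (N j * N k)) ^ (1 / (j + k : ℝ))}

/-- `mg (M, N) = sup_{j+k ≥ 1} (M (j+k) / (N j * N k)) ^ (1/(j+k))`. -/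
def mg (M N : ℕ → ℝ) : ℝ := sSup (mgSet M N)

/-- `mg (M, N) < ∞`. -/
def MgFinite (M N : ℕ → ℝ) : Prop := BddAbove (mgSet M N)

/-- A weight sequence is regular: `m k ^ (1/k) → ∞`, derivation closed, and
`Γ̄_m (C t) ≤ Γ̲_m t` for some `C ≥ 1`. -/
def RegularWS (M : ℕ → ℝ) : Prop :=
  RootTendsToInfty (mseq M) ∧ DerivClosed M ∧
    ∃ C : ℝ, 1 ≤ C ∧ ∀ t : ℝ, 0 < t → GammaBar (mseq M) (C * t) ≤ GammaLow (mseq M) t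

/-- `f` is of class `E^{M}` (Roumieu) on the open set `U`. -/
def RoumieuOn {E : Type*} [NormedAddCommGroup E] [NormedSpace ℝ E]
    (M : ℕ → ℝ) (f : E → ℂ) (U : Set E) : Prop :=
  ContDiffOn ℝ (⊤ : ℕ∞) f U ∧
    ∀ V : Set E, IsOpen V → IsCompact (closure V) → closure V ⊆ U →
      ∃ C σ : ℝ, 0 < C ∧ 0 < σ ∧
        ∀ x ∈ V, ∀ k : ℕ, ‖iteratedFDerivWithin ℝ k f U x‖ ≤ C * σ ^ k * M k

/-- `f` is of class `E^{(M)}` (Beurling) on the open set `U`. -/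
def BeurlingOn {E : Type*} [NormedAddCommGroup E] [NormedSpace ℝ E]
    (M : ℕ → ℝ) (f : E → ℂ) (U : Set E) : Prop :=
  ContDiffOn ℝ (⊤ : ℕ∞) f U ∧
    ∀ V : Set E, IsOpen V → IsCompact (closure V) → closure V ⊆ U →
      ∀ σ : ℝ, 0 < σ → ∃ C : ℝ, 0 < C ∧
        ∀ x ∈ V, ∀ k : ℕ, ‖iteratedFDerivWithin ℝ k f U x‖ ≤ C * σ ^ k * M k

/-- A weight matrix: a nonempty, pointwise totally ordered family of weight sequences. -/
def IsWeightMatrix (W : Set (ℕ → ℝ)) : Prop :=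
  W.Nonempty ∧ (∀ M ∈ W, IsWeightSeq M) ∧
    ∀ M ∈ W, ∀ N ∈ W, (∀ k, M k ≤ N k) ∨ (∀ k, N k ≤ M k)

/-- R-regularity of a weight matrix. -/
def RRegular (W : Set (ℕ → ℝ)) : Prop :=
  (∀ M ∈ W, RootTendsToInfty (mseq M)) ∧
    (∀ M ∈ W, ∃ N ∈ W, ∃ C : ℝ, 1 ≤ C ∧ ∀ j : ℕ, M (j + 1) ≤ C ^ (j + 1) * N j) ∧
    (∀ M ∈ W, ∃ N ∈ W, ∃ C : ℝ, 1 ≤ C ∧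
      ∀ t : ℝ, 0 < t → GammaBar (mseq N) (C * t) ≤ GammaLow (mseq M) t)

/-- B-regularity of a weight matrix. -/
def BRegular (W : Set (ℕ → ℝ)) : Prop :=
  (∀ M ∈ W, RootTendsToInfty (mseq M)) ∧
    (∀ M ∈ W, ∃ N ∈ W, ∃ C : ℝ, 1 ≤ C ∧ ∀ j : ℕ, N (j + 1) ≤ C ^ j * M j) ∧
    (∀ M ∈ W, ∃ N ∈ W, ∃ C : ℝ, 1 ≤ C ∧
      ∀ t : ℝ, 0 < t → GammaBar (mseq M) (C * t) ≤ GammaLow (mseq N) t)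

/-- R-moderate growth of a weight matrix. -/
def RModerateGrowth (W : Set (ℕ → ℝ)) : Prop := ∀ M ∈ W, ∃ N ∈ W, MgFinite M N

/-- B-moderate growth of a weight matrix. -/
def BModerateGrowth (W : Set (ℕ → ℝ)) : Prop := ∀ M ∈ W, ∃ N ∈ W, MgFinite N M

/-- `f` is of class `E^{W}` (Roumieu, weight matrix) on the open set `U`. -/
def MatrixRoumieuOn {E : Type*} [NormedAddCommGroup E] [NormedSpace ℝ E]
    (W : Set (ℕ → ℝ)) (f : E → ℂ) (U : Set E) : Prop :=
  ContDiffOn ℝ (⊤ : ℕ∞) f U ∧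
    ∀ V : Set E, IsOpen V → IsCompact (closure V) → closure V ⊆ U →
      ∃ M ∈ W, ∃ C σ : ℝ, 0 < C ∧ 0 < σ ∧
        ∀ x ∈ V, ∀ k : ℕ, ‖iteratedFDerivWithin ℝ k f U x‖ ≤ C * σ ^ k * M k

/-- `f` is of class `E^{(W)}` (Beurling, weight matrix) on the open set `U`. -/
def MatrixBeurlingOn {E : Type*} [NormedAddCommGroup E] [NormedSpace ℝ E]
    (W : Set (ℕ → ℝ)) (f : E → ℂ) (U : Set E) : Prop :=
  ContDiffOn ℝ (⊤ : ℕ∞) f U ∧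
    ∀ V : Set E, IsOpen V → IsCompact (closure V) → closure V ⊆ U →
      ∀ M ∈ W, ∀ σ : ℝ, 0 < σ → ∃ C : ℝ, 0 < C ∧
        ∀ x ∈ V, ∀ k : ℕ, ‖iteratedFDerivWithin ℝ k f U x‖ ≤ C * σ ^ k * M k

/-- `ω` is a weight function. -/
def IsWeightFunction (ω : ℝ → ℝ) : Prop :=
  ContinuousOn ω (Ici 0) ∧ MonotoneOn ω (Ici 0) ∧ (∀ t ∈ Ici (0 : ℝ), 0 ≤ ω t) ∧
    ((fun t => ω (2 * t)) =O[atTop] ω) ∧ (ω =o[atTop] fun t : ℝ => t) ∧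
    ((fun t => Real.log t) =o[atTop] ω) ∧ ConvexOn ℝ (Ici 0) fun t => ω (Real.exp t)

/-- The Young conjugate `φ*_ω (s) = sup_{t ≥ 0} (s t - ω (e^t))`. -/
def phiStar (ω : ℝ → ℝ) (s : ℝ) : ℝ := sSup ((fun t => s * t - ω (Real.exp t)) '' Ici 0)

/-- Non-quasianalyticity of a weight function. -/
def NonQuasianalyticW (ω : ℝ → ℝ) : Prop := IntegrableOn (fun t => ω t / t ^ 2) (Ici 1)

/-- `f` is of class `E^{ω}` (Roumieu) on the open set `U`. -/
def OmegaRoumieuOn {E : Type*} [NormedAddCommGroup E] [NormedSpace ℝ E]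
    (ω : ℝ → ℝ) (f : E → ℂ) (U : Set E) : Prop :=
  ContDiffOn ℝ (⊤ : ℕ∞) f U ∧
    ∀ V : Set E, IsOpen V → IsCompact (closure V) → closure V ⊆ U →
      ∃ C ρ : ℝ, 0 < C ∧ 0 < ρ ∧
        ∀ x ∈ V, ∀ k : ℕ,
          ‖iteratedFDerivWithin ℝ k f U x‖ ≤ C * Real.exp (phiStar ω (ρ * k) / ρ)

/-- `f` is of class `E^{(ω)}` (Beurling) on the open set `U`. -/
def OmegaBeurlingOn {E : Type*} [NormedAddCommGroup E] [NormedSpace ℝ E]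
    (ω : ℝ → ℝ) (f : E → ℂ) (U : Set E) : Prop :=
  ContDiffOn ℝ (⊤ : ℕ∞) f U ∧
    ∀ V : Set E, IsOpen V → IsCompact (closure V) → closure V ⊆ U →
      ∀ ρ : ℝ, 0 < ρ → ∃ C : ℝ, 0 < C ∧
        ∀ x ∈ V, ∀ k : ℕ,
          ‖iteratedFDerivWithin ℝ k f U x‖ ≤ C * Real.exp (phiStar ω (ρ * k) / ρ)

/-- The open ellipse `Ω_ε` with vertices `± cosh ε` and co-vertices `± i sinh ε`. -/
def OmegaE (ε : ℝ) : Set ℂ :=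
  {z : ℂ | (z.re / Real.cosh ε) ^ 2 + (z.im / Real.sinh ε) ^ 2 < 1}

/-- The sequence space `Λ^{M}`. -/
def Lambda (M : ℕ → ℝ) : Set (ℕ → ℂ) :=
  {c | ∃ ρ : ℝ, 0 < ρ ∧ ∃ C : ℝ, ∀ k, ‖c k‖ ≤ C * ρ ^ k * M k}

/-- `L(M)`: all non-quasianalytic weight sequences `N ≥ M` with `n = N/k!` log-convex. -/
def LM (M : ℕ → ℝ) : Set (ℕ → ℝ) :=
  {N | IsWeightSeq N ∧ NonQuasianalytic N ∧ (∀ k, M k ≤ N k) ∧ LogConvexSeq (mseq N)}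

/-- A quasianalytic weight sequence `M` is intersectable if `Λ^{M} = ⋂_{N ∈ L(M)} Λ^{N}`. -/
def Intersectable (M : ℕ → ℝ) : Prop := Lambda M = ⋂ N ∈ LM M, Lambda N

/-!
Let `linearizeBelow ω a` vanish at `0` and have derivative `ω' (max t a)`; the derivative `ω'`
exists because `ω` is concave and `ω ∘ exp` is convex. This function is again concave and
nondecreasing, with convex composition with `exp`; it lies below `ω` and differs from `ω` by a
constant on `[a, ∞)`. As `a → ∞`, the slope `ω' a` tends to `0`, so these functions become uniformly
small relative to `1 + |g|` whenever `ω = o(g)`, and their integrals against `t⁻²` tend to `0`.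
Hence the thresholds `a n` can be chosen so that `ω̃ = ∑' n, linearizeBelow ω (a n)` is
non-quasianalytic and both `o(t)` and `o(f)`, while each of its infinitely many terms is asymptotic
to `ω`, so that `ω = o(ω̃)`.
-/

section Series

variable {ι : Type*}

lemma convexOn_tsum {V : Type*} [AddCommMonoid V] [Module ℝ V] {s : Set V} {h : ι → V → ℝ}
    (hs : Convex ℝ s) (hconv : ∀ i, ConvexOn ℝ s (h i))
    (hsum : ∀ x ∈ s, Summable fun i => h i x) : ConvexOn ℝ s fun x => ∑' i, h i x := by
  refine ⟨hs, fun x hx y hy u v hu hv huv => ?_⟩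
  have hxu := (hsum x hx).const_smul u
  have hyv := (hsum y hy).const_smul v
  calc ∑' i, h i (u • x + v • y)
      ≤ ∑' i, (u • h i x + v • h i y) :=
        (hsum _ (hs hx hy hu hv huv)).tsum_le_tsum (fun i => (hconv i).2 hx hy hu hv huv)
          (hxu.add hyv)
    _ = u • ∑' i, h i x + v • ∑' i, h i y := by
        rw [hxu.tsum_add hyv, (hsum x hx).tsum_const_smul, (hsum y hy).tsum_const_smul]

lemma concaveOn_tsum {V : Type*} [AddCommMonoid V] [Module ℝ V] {s : Set V} {h : ι → V → ℝ}
    (hs : Convex ℝ s) (hconc : ∀ i, ConcaveOn ℝ s (h i))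
    (hsum : ∀ x ∈ s, Summable fun i => h i x) : ConcaveOn ℝ s fun x => ∑' i, h i x := by
  have hneg := (convexOn_tsum hs (fun i => (hconc i).neg) fun x hx => (hsum x hx).neg).neg
  simpa only [Pi.neg_def, tsum_neg, neg_neg] using hneg

lemma isLittleO_tsum {α E F : Type*} [SeminormedAddCommGroup E] [SeminormedAddCommGroup F]
    {l : Filter α} {h : ι → α → F} {g : α → E} {u : ι → ℝ} (hu : Summable u)
    (hbound : ∀ᶠ x in l, ∀ i, ‖h i x‖ ≤ u i * ‖g x‖) (hlit : ∀ i, h i =o[l] g) :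
    (fun x => ∑' i, h i x) =o[l] g := by
  have hratio : Tendsto (fun x => ∑' i, ‖h i x‖ / ‖g x‖) l (nhds 0) := by
    have hterm (i : ι) : Tendsto (fun x => ‖h i x‖ / ‖g x‖) l (nhds 0) :=
      (hlit i).norm_norm.tendsto_div_nhds_zero
    refine tsum_zero (α := ℝ) (β := ι) ▸ tendsto_tsum_of_dominated_convergence hu.abs hterm ?_
    filter_upwards [hbound] with x hx i
    rw [Real.norm_of_nonneg (by positivity)]
    refine div_le_of_le_mul₀ (norm_nonneg _) (abs_nonneg _) ((hx i).trans ?_)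
    gcongr
    exact le_abs_self _
  refine IsLittleO.of_bound fun c hc => ?_
  filter_upwards [hbound, hratio.eventually_le_const hc] with x hx hxc
  have hnorm : Summable fun i => ‖h i x‖ :=
    .of_nonneg_of_le (fun i => norm_nonneg _) hx (hu.mul_right _)
  have hcancel (i : ι) : ‖h i x‖ / ‖g x‖ * ‖g x‖ = ‖h i x‖ :=
    div_mul_cancel_of_imp fun hg => le_antisymm (by simpa [hg] using hx i) (norm_nonneg _)
  calc ‖∑' i, h i x‖ ≤ ∑' i, ‖h i x‖ := norm_tsum_le_tsum_norm hnorm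
    _ = (∑' i, ‖h i x‖ / ‖g x‖) * ‖g x‖ := by simp only [← tsum_mul_right, hcancel]
    _ ≤ c * ‖g x‖ := by gcongr

lemma isLittleO_tsum_of_isEquivalent [Infinite ι] {α : Type*} {l : Filter α} {h : ι → α → ℝ}
    {g : α → ℝ} (hequiv : ∀ i, h i ~[l] g) (hnonneg : ∀ᶠ x in l, ∀ i, 0 ≤ h i x)
    (hsum : ∀ᶠ x in l, Summable fun i => h i x) : g =o[l] fun x => ∑' i, h i x := by
  have htwo (i : ι) : ∀ᶠ x in l, ‖g x‖ ≤ 2 * h i x := by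
    filter_upwards [hnonneg, (hequiv i).isLittleO.bound one_half_pos] with x hx hdiff
    have hnorm := norm_sub_norm_le (g x) (h i x)
    rw [norm_sub_rev, Real.norm_of_nonneg (hx i)] at hnorm
    simp only [Pi.sub_apply] at hdiff
    linarith
  refine isLittleO_iff_nat_mul_le.2 fun N => ?_
  obtain ⟨s, hs⟩ := Infinite.exists_subset_card_eq ι (2 * N)
  filter_upwards [hnonneg, hsum, (Finset.eventually_all s).2 fun i _ => htwo i] with x hx hsx hgx
  have hpartial : ∑ _i ∈ s, ‖g x‖ ≤ ∑ i ∈ s, 2 * h i x := Finset.sum_le_sum hgx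
  have htail : ∑ i ∈ s, h i x ≤ ∑' i, h i x := hsx.sum_le_tsum s fun i _ => hx i
  rw [← Finset.mul_sum, Finset.sum_const, hs, nsmul_eq_mul, Nat.cast_mul, Nat.cast_two] at hpartial
  rw [Real.norm_of_nonneg (tsum_nonneg hx)]
  linarith

lemma integrable_tsum_of_summable_integral_norm [Countable ι] {α E : Type*}
    {mα : MeasurableSpace α} {μ : Measure α} [NormedAddCommGroup E] [CompleteSpace E]
    {F : ι → α → E} (hF : ∀ i, Integrable (F i) μ)
    (hsum : Summable fun i => ∫ x, ‖F i x‖ ∂μ) : Integrable (fun x => ∑' i, F i x) μ := by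
  have hfinite : ∑' i, ∫⁻ x, ‖F i x‖ₑ ∂μ ≠ ⊤ := by
    simp_rw [← ofReal_integral_norm_eq_lintegral_enorm (hF _)]
    exact hsum.tsum_ofReal_ne_top
  have hsummable : ∀ᵐ x ∂μ, Summable fun i => F i x := by
    refine (summable_norm_of_tsum_eLpNorm_ne_top le_rfl (fun i => (hF i).1) ?_).mono
      fun x hx => hx.of_norm
    simpa only [eLpNorm_one_eq_lintegral_enorm] using hfinite
  refine ⟨aestronglyMeasurable_of_tendsto_ae atTop
    (fun s => s.aestronglyMeasurable_fun_sum fun i _ => (hF i).1)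
    (hsummable.mono fun x hx => hx.hasSum), ?_⟩
  calc ∫⁻ x, ‖∑' i, F i x‖ₑ ∂μ ≤ ∫⁻ x, ∑' i, ‖F i x‖ₑ ∂μ :=
        lintegral_mono fun x => enorm_tsum_le_tsum_enorm
    _ = ∑' i, ∫⁻ x, ‖F i x‖ₑ ∂μ := lintegral_tsum fun i => (hF i).1.enorm
    _ < ⊤ := hfinite.lt_top

end Series

lemma differentiableAt_of_concaveOn_of_convexOn_comp_exp {f : ℝ → ℝ} {s u : Set ℝ} {t : ℝ}
    (hconc : ConcaveOn ℝ s f) (hconv : ConvexOn ℝ u fun r => f (Real.exp r))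
    (hs : Real.exp t ∈ interior s) (hu : t ∈ interior u) : DifferentiableAt ℝ f (Real.exp t) := by
  -- Concavity of `f` and convexity of `f ∘ exp` order the one-sided derivatives in opposite ways.
  have hleft := (hconc.neg.hasDerivWithinAt_leftDeriv_of_mem_interior hs).neg
  have hright := (hconc.neg.hasDerivWithinAt_rightDeriv_of_mem_interior hs).neg
  have hle := neg_le_neg (hconc.neg.leftDeriv_le_rightDeriv_of_mem_interior hs)
  rw [neg_neg] at hleft hright
  set L := -derivWithin (-f) (Iio (Real.exp t)) (Real.exp t)
  set R := -derivWithin (-f) (Ioi (Real.exp t)) (Real.exp t)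
  have hexp := Real.hasDerivAt_exp t
  have hleftExp : HasDerivWithinAt (fun r => f (Real.exp r)) (L * Real.exp t) (Iio t) t :=
    hleft.comp t hexp.hasDerivWithinAt fun _ => Real.exp_lt_exp.2
  have hrightExp : HasDerivWithinAt (fun r => f (Real.exp r)) (R * Real.exp t) (Ioi t) t :=
    hright.comp t hexp.hasDerivWithinAt fun _ => Real.exp_lt_exp.2
  have hge := hconv.leftDeriv_le_rightDeriv_of_mem_interior hu
  rw [hleftExp.derivWithin (uniqueDiffWithinAt_Iio t),
    hrightExp.derivWithin (uniqueDiffWithinAt_Ioi t)] at hge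
  have hLR : L = R := le_antisymm (le_of_mul_le_mul_right hge (Real.exp_pos t)) hle
  rw [hLR] at hleft
  have hboth := (hasDerivWithinAt_Iio_iff_Iic.1 hleft).union (hasDerivWithinAt_Ioi_iff_Ici.1 hright)
  rw [Iic_union_Ici] at hboth
  exact (hasDerivWithinAt_univ.1 hboth).differentiableAt

/-- Concave weight functions without their growth conditions: nonnegative nondecreasing concave
functions `ω` on `[0, ∞)` for which `t ↦ ω (exp t)` is convex on `[0, ∞)`. -/
structure IsConcaveExpConvex (ω : ℝ → ℝ) : Prop where
  concaveOn : ConcaveOn ℝ (Ici 0) ω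
  convexOn_comp_exp : ConvexOn ℝ (Ici 0) fun t => ω (Real.exp t)
  monotoneOn : MonotoneOn ω (Ici 0)
  nonneg_zero : 0 ≤ ω 0

/-- The function vanishing at `0` whose derivative is that of `ω` on `[a, ∞)` and is constantly
`deriv ω a` below `a`. -/
def linearizeBelow (ω : ℝ → ℝ) (a t : ℝ) : ℝ :=
  deriv ω a * min t a + (ω (max t a) - ω a)

lemma linearizeBelow_of_le (ω : ℝ → ℝ) {a t : ℝ} (h : t ≤ a) :
    linearizeBelow ω a t = deriv ω a * t := by
  simp [linearizeBelow, h]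

lemma linearizeBelow_of_ge (ω : ℝ → ℝ) {a t : ℝ} (h : a ≤ t) :
    linearizeBelow ω a t = ω t - (ω a - deriv ω a * a) := by
  rw [linearizeBelow, min_eq_right h, max_eq_left h]
  ring

lemma hasDerivAt_linearizeBelow {ω : ℝ → ℝ} {a : ℝ} (hd : ∀ t, a ≤ t → DifferentiableAt ℝ ω t)
    (t : ℝ) : HasDerivAt (linearizeBelow ω a) (deriv ω (max t a)) t := by
  have hlinear (x : ℝ) : HasDerivAt (fun t => deriv ω a * t) (deriv ω a) x := by
    simpa using (hasDerivAt_id x).const_mul (deriv ω a)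
  have htail (x : ℝ) (hx : a ≤ x) :
      HasDerivAt (fun t => ω t - (ω a - deriv ω a * a)) (deriv ω x) x :=
    (hd x hx).hasDerivAt.sub_const _
  rcases lt_trichotomy t a with h | rfl | h
  · rw [max_eq_right h.le]
    refine (hlinear t).congr_of_eventuallyEq ?_
    filter_upwards [Iio_mem_nhds h] with x hx using linearizeBelow_of_le ω (le_of_lt hx)
  · rw [max_self]
    have hbelow := (hlinear t).hasDerivWithinAt.congr (s := Iic t)
      (fun x hx => linearizeBelow_of_le ω hx) (linearizeBelow_of_le ω le_rfl)
    have habove := (htail t le_rfl).hasDerivWithinAt.congr (s := Ici t)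
      (fun x hx => linearizeBelow_of_ge ω hx) (linearizeBelow_of_ge ω le_rfl)
    simpa using hbelow.union habove
  · rw [max_eq_left h.le]
    refine (htail t h.le).congr_of_eventuallyEq ?_
    filter_upwards [Ioi_mem_nhds h] with x hx using linearizeBelow_of_ge ω (le_of_lt hx)

lemma isEquivalent_linearizeBelow {ω : ℝ → ℝ} (htop : Tendsto (fun t => ‖ω t‖) atTop atTop)
    (a : ℝ) : linearizeBelow ω a ~[atTop] ω := by
  have hconst : (fun _ : ℝ => -(ω a - deriv ω a * a)) =o[atTop] ω :=
    isLittleO_const_left.2 (Or.inr htop)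
  refine hconst.congr' ?_ .rfl
  filter_upwards [eventually_ge_atTop a] with t ht
  rw [Pi.sub_apply, linearizeBelow_of_ge ω ht]
  ring

namespace IsConcaveExpConvex

variable {ω : ℝ → ℝ} {a t : ℝ}

lemma nonneg (hω : IsConcaveExpConvex ω) (ht : 0 ≤ t) : 0 ≤ ω t :=
  hω.nonneg_zero.trans (hω.monotoneOn self_mem_Ici ht ht)

lemma differentiableAt (hω : IsConcaveExpConvex ω) (ht : 1 < t) : DifferentiableAt ℝ ω t := by
  have h0 : 0 < t := zero_lt_one.trans ht
  rw [← Real.exp_log h0]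
  refine differentiableAt_of_concaveOn_of_convexOn_comp_exp hω.concaveOn hω.convexOn_comp_exp ?_ ?_
  · simpa only [interior_Ici, Real.exp_log h0, mem_Ioi] using h0
  · simpa only [interior_Ici, mem_Ioi] using Real.log_pos ht

lemma deriv_nonneg (hω : IsConcaveExpConvex ω) (ht : 0 < t) : 0 ≤ deriv ω t := by
  rw [← derivWithin_of_mem_nhds (Ici_mem_nhds ht)]
  exact hω.monotoneOn.derivWithin_nonneg

lemma antitoneOn_deriv (hω : IsConcaveExpConvex ω) : AntitoneOn (deriv ω) (Ioi 1) :=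
  (hω.concaveOn.subset (Ioi_subset_Ici zero_le_one) (convex_Ioi 1)).antitoneOn_deriv
    fun _ ht => hω.differentiableAt ht

lemma monotoneOn_mul_deriv (hω : IsConcaveExpConvex ω) :
    MonotoneOn (fun t => t * deriv ω t) (Ioi 1) := by
  have hderiv (r : ℝ) (hr : 0 < r) :
      HasDerivAt (fun r => ω (Real.exp r)) (Real.exp r * deriv ω (Real.exp r)) r := by
    rw [mul_comm]
    exact (hω.differentiableAt (Real.one_lt_exp_iff.2 hr)).hasDerivAt.comp r (Real.hasDerivAt_exp r)
  have hmono := (hω.convexOn_comp_exp.subset Ioi_subset_Ici_self (convex_Ioi 0)).monotoneOn_deriv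
    fun r hr => (hderiv r hr).differentiableAt
  intro x hx y hy hxy
  have hx0 : 0 < x := zero_lt_one.trans hx
  have hy0 : 0 < y := zero_lt_one.trans hy
  have hlog := hmono (Real.log_pos hx) (Real.log_pos hy) (Real.log_le_log hx0 hxy)
  rwa [(hderiv _ (Real.log_pos hx)).deriv, (hderiv _ (Real.log_pos hy)).deriv,
    Real.exp_log hx0, Real.exp_log hy0] at hlog

lemma deriv_mul_le (hω : IsConcaveExpConvex ω) (ha : 1 < a) : deriv ω a * a ≤ ω a := by
  have h0 : 0 < a := zero_lt_one.trans ha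
  have hslope := hω.concaveOn.deriv_le_slope self_mem_Ici h0.le h0 (hω.differentiableAt ha)
  rw [slope_def_field, sub_zero, le_div_iff₀ h0] at hslope
  linarith [hω.nonneg_zero]

lemma tendsto_deriv_atTop (hω : IsConcaveExpConvex ω) (hlit : ω =o[atTop] fun t : ℝ => t) :
    Tendsto (deriv ω) atTop (nhds 0) := by
  refine tendsto_of_tendsto_of_tendsto_of_le_of_le' tendsto_const_nhds hlit.tendsto_div_nhds_zero
    ?_ ?_
  · filter_upwards [eventually_gt_atTop 0] with a ha using hω.deriv_nonneg ha
  · filter_upwards [eventually_gt_atTop 1] with a ha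
    exact (le_div_iff₀ (zero_lt_one.trans ha)).2 (hω.deriv_mul_le ha)

lemma concaveOn_linearizeBelow (hω : IsConcaveExpConvex ω) (ha : 1 < a) :
    ConcaveOn ℝ univ (linearizeBelow ω a) := by
  have hd := hasDerivAt_linearizeBelow fun _ hx => hω.differentiableAt (ha.trans_le hx)
  refine Antitone.concaveOn_univ_of_deriv (fun t => (hd t).differentiableAt) fun x y hxy => ?_
  rw [(hd x).deriv, (hd y).deriv]
  exact hω.antitoneOn_deriv (ha.trans_le (le_max_right x a)) (ha.trans_le (le_max_right y a))
    (max_le_max_right a hxy)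

lemma convexOn_linearizeBelow_comp_exp (hω : IsConcaveExpConvex ω) (ha : 1 < a) :
    ConvexOn ℝ univ fun t => linearizeBelow ω a (Real.exp t) := by
  have hd (t : ℝ) : HasDerivAt (fun t => linearizeBelow ω a (Real.exp t))
      (Real.exp t * deriv ω (max (Real.exp t) a)) t := by
    rw [mul_comm]
    exact (hasDerivAt_linearizeBelow (fun _ hx => hω.differentiableAt (ha.trans_le hx)) _).comp t
      (Real.hasDerivAt_exp t)
  refine Monotone.convexOn_univ_of_deriv (fun t => (hd t).differentiableAt) fun x y hxy => ?_
  rw [(hd x).deriv, (hd y).deriv]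
  have hexp := Real.exp_le_exp.2 hxy
  have hmax : 1 < max (Real.exp x) a := ha.trans_le (le_max_right _ a)
  have hnonneg : 0 ≤ deriv ω (max (Real.exp x) a) := hω.deriv_nonneg (zero_lt_one.trans hmax)
  rcases le_total (Real.exp y) a with hy | hy
  · rw [max_eq_right (hexp.trans hy)] at hnonneg ⊢
    rw [max_eq_right hy]
    gcongr
  · calc Real.exp x * deriv ω (max (Real.exp x) a)
        ≤ max (Real.exp x) a * deriv ω (max (Real.exp x) a) := by gcongr; exact le_max_left _ a
      _ ≤ Real.exp y * deriv ω (Real.exp y) :=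
        hω.monotoneOn_mul_deriv hmax (ha.trans_le hy) (max_le hexp hy)
      _ = Real.exp y * deriv ω (max (Real.exp y) a) := by rw [max_eq_left hy]

lemma isConcaveExpConvex_linearizeBelow (hω : IsConcaveExpConvex ω) (ha : 1 < a) :
    IsConcaveExpConvex (linearizeBelow ω a) where
  concaveOn := (hω.concaveOn_linearizeBelow ha).subset (subset_univ _) (convex_Ici 0)
  convexOn_comp_exp :=
    (hω.convexOn_linearizeBelow_comp_exp ha).subset (subset_univ _) (convex_Ici 0)
  monotoneOn := by
    have hd := hasDerivAt_linearizeBelow fun _ hx => hω.differentiableAt (ha.trans_le hx)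
    refine (monotone_of_deriv_nonneg (fun t => (hd t).differentiableAt) fun t => ?_).monotoneOn _
    rw [(hd t).deriv]
    exact hω.deriv_nonneg (zero_lt_one.trans (ha.trans_le (le_max_right t a)))
  nonneg_zero := by rw [linearizeBelow_of_le ω (by linarith), mul_zero]

lemma linearizeBelow_le_deriv_mul (hω : IsConcaveExpConvex ω) (ha : 1 < a) (t : ℝ) :
    linearizeBelow ω a t ≤ deriv ω a * t := by
  rcases le_or_gt t a with h | h
  · rw [linearizeBelow_of_le ω h]
  · have h0 : 0 < a := zero_lt_one.trans ha
    have hslope := hω.concaveOn.slope_le_deriv h0.le (h0.trans h).le h (hω.differentiableAt ha)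
    rw [slope_def_field, div_le_iff₀ (sub_pos.2 h)] at hslope
    rw [linearizeBelow_of_ge ω h.le]
    linarith

lemma linearizeBelow_le_self (hω : IsConcaveExpConvex ω) (ha : 1 < a) (ht : 0 ≤ t) :
    linearizeBelow ω a t ≤ ω t := by
  have htangent := hω.deriv_mul_le ha
  rcases le_total t a with h | h
  · have hgap : ConcaveOn ℝ (Ici 0) fun t => ω t - deriv ω a * t :=
      hω.concaveOn.sub ((convexOn_id (convex_Ici 0)).smul (hω.deriv_nonneg (zero_lt_one.trans ha)))
    have hmin := hgap.min_le_of_mem_Icc self_mem_Ici (ht.trans h) ⟨ht, h⟩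
    have hends : 0 ≤ min (ω 0 - deriv ω a * 0) (ω a - deriv ω a * a) :=
      le_min (by simpa using hω.nonneg_zero) (sub_nonneg.2 htangent)
    rw [linearizeBelow_of_le ω h]
    exact sub_nonneg.1 (hends.trans hmin)
  · rw [linearizeBelow_of_ge ω h]
    linarith

lemma norm_linearizeBelow_div_sq_le (hω : IsConcaveExpConvex ω) (ha : 1 < a) (ht : 0 ≤ t) :
    ‖linearizeBelow ω a t / t ^ 2‖ ≤ ω t / t ^ 2 := by
  have hnonneg := (hω.isConcaveExpConvex_linearizeBelow ha).nonneg ht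
  rw [Real.norm_of_nonneg (by positivity)]
  gcongr
  exact hω.linearizeBelow_le_self ha ht

lemma nonQuasianalyticW_linearizeBelow (hω : IsConcaveExpConvex ω) (hnq : NonQuasianalyticW ω)
    (ha : 1 < a) : NonQuasianalyticW (linearizeBelow ω a) := by
  have hcont : Continuous (linearizeBelow ω a) := continuous_iff_continuousAt.2 fun t =>
    (hasDerivAt_linearizeBelow (fun _ hx => hω.differentiableAt (ha.trans_le hx)) t).continuousAt
  refine Integrable.mono' hnq (ContinuousOn.aestronglyMeasurable ?_ measurableSet_Ici) ?_
  · exact hcont.continuousOn.div (by fun_prop) fun t ht => (pow_pos (zero_lt_one.trans_le ht) 2).ne'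
  · filter_upwards [ae_restrict_mem measurableSet_Ici] with t ht
    exact hω.norm_linearizeBelow_div_sq_le ha (zero_le_one.trans ht)

lemma tendsto_integral_linearizeBelow (hω : IsConcaveExpConvex ω)
    (hlit : ω =o[atTop] fun t : ℝ => t) (hnq : NonQuasianalyticW ω) :
    Tendsto (fun a => ∫ t in Ici 1, linearizeBelow ω a t / t ^ 2) atTop (nhds 0) := by
  have hpointwise (t : ℝ) : Tendsto (fun a => linearizeBelow ω a t / t ^ 2) atTop (nhds 0) := by
    have hlinear := ((hω.tendsto_deriv_atTop hlit).mul_const t).div_const (t ^ 2)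
    rw [zero_mul, zero_div] at hlinear
    refine hlinear.congr' ?_
    filter_upwards [eventually_ge_atTop t] with a ha
    rw [linearizeBelow_of_le ω ha]
  have hdominated : ∀ᶠ a in atTop, ∀ᵐ t ∂volume.restrict (Ici 1),
      ‖linearizeBelow ω a t / t ^ 2‖ ≤ ω t / t ^ 2 := by
    filter_upwards [eventually_gt_atTop 1] with a ha
    filter_upwards [ae_restrict_mem measurableSet_Ici] with t ht
    exact hω.norm_linearizeBelow_div_sq_le ha (zero_le_one.trans ht)
  have hmeas : ∀ᶠ a in atTop, AEStronglyMeasurable (fun t => linearizeBelow ω a t / t ^ 2)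
      (volume.restrict (Ici 1)) := by
    filter_upwards [eventually_gt_atTop 1] with a ha
    exact (hω.nonQuasianalyticW_linearizeBelow hnq ha).aestronglyMeasurable
  simpa using tendsto_integral_filter_of_dominated_convergence _ hmeas hdominated hnq
    (Eventually.of_forall hpointwise)

lemma eventually_linearizeBelow_le {E : Type*} [SeminormedAddCommGroup E] {g : ℝ → E} {ε : ℝ}
    (hω : IsConcaveExpConvex ω) (hlit : ω =o[atTop] fun t : ℝ => t) (hg : ω =o[atTop] g)
    (hε : 0 < ε) :
    ∀ᶠ a in atTop, ∀ t, 0 ≤ t → linearizeBelow ω a t ≤ ε * (1 + ‖g t‖) := by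
  obtain ⟨R, hR⟩ := eventually_atTop.1 (hg.bound hε)
  have hslope : ∀ᶠ a in atTop, deriv ω a * R ≤ ε := by
    have hlimit := (hω.tendsto_deriv_atTop hlit).mul_const R
    rw [zero_mul] at hlimit
    exact hlimit.eventually_le_const hε
  filter_upwards [eventually_gt_atTop 1, hslope] with a ha haR t ht
  rcases le_total t R with h | h
  · calc linearizeBelow ω a t ≤ deriv ω a * t := hω.linearizeBelow_le_deriv_mul ha t
      _ ≤ deriv ω a * R := mul_le_mul_of_nonneg_left h (hω.deriv_nonneg (zero_lt_one.trans ha))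
      _ ≤ ε := haR
      _ ≤ ε * (1 + ‖g t‖) := le_mul_of_one_le_right hε.le (by simp)
  · calc linearizeBelow ω a t ≤ ω t := hω.linearizeBelow_le_self ha ht
      _ ≤ ε * ‖g t‖ := (le_abs_self _).trans (hR t h)
      _ ≤ ε * (1 + ‖g t‖) := by gcongr; simp

lemma exists_seq_linearizeBelow_le {E : Type*} [SeminormedAddCommGroup E] {f : ℝ → E}
    (hω : IsConcaveExpConvex ω) (hlit : ω =o[atTop] fun t : ℝ => t) (hnq : NonQuasianalyticW ω)
    (hof : ω =o[atTop] f) {ε : ℕ → ℝ} (hε : ∀ n, 0 < ε n) :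
    ∃ a : ℕ → ℝ, (∀ n, 1 < a n) ∧
      (∀ n t, 0 ≤ t → linearizeBelow ω (a n) t ≤ ε n * (1 + ‖t‖)) ∧
      (∀ n t, 0 ≤ t → linearizeBelow ω (a n) t ≤ ε n * (1 + ‖f t‖)) ∧
      ∀ n, ∫ t in Ici 1, linearizeBelow ω (a n) t / t ^ 2 ≤ ε n := by
  have hexists (n : ℕ) := ((eventually_gt_atTop 1).and
    ((hω.eventually_linearizeBelow_le hlit hlit (hε n)).and
    ((hω.eventually_linearizeBelow_le hlit hof (hε n)).and
    ((hω.tendsto_integral_linearizeBelow hlit hnq).eventually_le_const (hε n))))).exists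
  choose a hone hid hf hint using hexists
  exact ⟨a, hone, hid, hf, hint⟩

lemma tsum {ι : Type*} {h : ι → ℝ → ℝ} (hh : ∀ i, IsConcaveExpConvex (h i))
    (hsum : ∀ t, 0 ≤ t → Summable fun i => h i t) : IsConcaveExpConvex fun t => ∑' i, h i t where
  concaveOn := concaveOn_tsum (convex_Ici 0) (fun i => (hh i).concaveOn) hsum
  convexOn_comp_exp := convexOn_tsum (convex_Ici 0) (fun i => (hh i).convexOn_comp_exp)
    fun t _ => hsum _ (Real.exp_pos t).le
  monotoneOn _ hx _ hy hxy :=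
    (hsum _ hx).tsum_le_tsum (fun i => (hh i).monotoneOn hx hy hxy) (hsum _ hy)
  nonneg_zero := tsum_nonneg fun i => (hh i).nonneg_zero

lemma two_mul_le (hω : IsConcaveExpConvex ω) (ht : 0 ≤ t) : ω (2 * t) ≤ 2 * ω t := by
  have hmid : 1 / 2 * ω 0 + 1 / 2 * ω (2 * t) ≤ ω t := by
    simpa using hω.concaveOn.2 self_mem_Ici (mul_nonneg zero_le_two ht) one_half_pos.le
      one_half_pos.le (add_halves 1)
  linarith [hω.nonneg_zero]

lemma isWeightFunction (hω : IsConcaveExpConvex ω)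
    (hcont : ContinuousWithinAt ω (Ici 0) 0) (hlit : ω =o[atTop] fun t : ℝ => t)
    (hlog : (fun t => Real.log t) =o[atTop] ω) : IsWeightFunction ω := by
  refine ⟨hω.concaveOn.continuousOn_Ici hcont, hω.monotoneOn, fun t => hω.nonneg, ?_, hlit, hlog,
    hω.convexOn_comp_exp⟩
  refine .of_bound 2 ?_
  filter_upwards [eventually_ge_atTop 0] with t ht
  rw [Real.norm_of_nonneg (hω.nonneg (by positivity)), Real.norm_of_nonneg (hω.nonneg ht)]
  exact hω.two_mul_le ht

end IsConcaveExpConvex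

lemma IsWeightFunction.isConcaveExpConvex {ω : ℝ → ℝ} (hω : IsWeightFunction ω)
    (hconc : ConcaveOn ℝ (Ici 0) ω) : IsConcaveExpConvex ω :=
  let ⟨_, hmono, hnonneg, _, _, _, hconv⟩ := hω
  ⟨hconc, hconv, hmono, hnonneg 0 self_mem_Ici⟩

lemma nonQuasianalyticW_tsum {ι : Type*} [Countable ι] {h : ι → ℝ → ℝ} {ε : ι → ℝ}
    (hnonneg : ∀ i t, 1 ≤ t → 0 ≤ h i t) (hnq : ∀ i, NonQuasianalyticW (h i)) (hε : Summable ε)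
    (hint : ∀ i, ∫ t in Ici 1, h i t / t ^ 2 ≤ ε i) : NonQuasianalyticW fun t => ∑' i, h i t := by
  have hnorm (i : ι) : ∫ t in Ici 1, ‖h i t / t ^ 2‖ = ∫ t in Ici 1, h i t / t ^ 2 :=
    setIntegral_congr_fun measurableSet_Ici fun t ht =>
      Real.norm_of_nonneg (div_nonneg (hnonneg i t ht) (sq_nonneg t))
  simp only [NonQuasianalyticW, ← tsum_div_const]
  refine integrable_tsum_of_summable_integral_norm hnq (.of_nonneg_of_le (fun i => ?_)
    (fun i => (hnorm i).trans_le (hint i)) hε)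
  exact integral_nonneg fun t => norm_nonneg _

section Sum

variable {ω : ℝ → ℝ} {ι : Type*} {a ε : ι → ℝ}

lemma continuousAt_tsum_linearizeBelow_zero (ha : ∀ i, 1 < a i) :
    ContinuousAt (fun t => ∑' i, linearizeBelow ω (a i) t) 0 := by
  have hlinear : ContinuousAt (fun t => (∑' i, deriv ω (a i)) * t) 0 := by fun_prop
  refine hlinear.congr ?_
  filter_upwards [Iio_mem_nhds zero_lt_one] with t ht
  simp only [linearizeBelow_of_le ω (ht.trans (ha _)).le, tsum_mul_right]

lemma isLittleO_tsum_linearizeBelow {E : Type*} [SeminormedAddCommGroup E] {g : ℝ → E}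
    (hω : IsConcaveExpConvex ω) (ha : ∀ i, 1 < a i) (hε : Summable ε)
    (htop : Tendsto (fun t => ‖ω t‖) atTop atTop) (hg : ω =o[atTop] g)
    (hbound : ∀ i t, 0 ≤ t → linearizeBelow ω (a i) t ≤ ε i * (1 + ‖g t‖)) :
    (fun t => ∑' i, linearizeBelow ω (a i) t) =o[atTop] g := by
  have hgtop : Tendsto (fun t => ‖g t‖) atTop atTop := by
    simpa only [norm_norm] using hg.norm_right.isBigO.trans_tendsto_norm_atTop htop
  have hone : (fun t => 1 + ‖g t‖) =Θ[atTop] g := by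
    have hconst : (fun _ => 1 : ℝ → ℝ) =o[atTop] fun t => ‖g t‖ :=
      isLittleO_const_left.2 (Or.inr (by simpa only [Function.comp_def, norm_norm] using hgtop))
    exact hconst.right_isTheta_add.symm.trans (isTheta_refl g atTop).norm_left
  have hterm (i : ι) : linearizeBelow ω (a i) =o[atTop] fun t => 1 + ‖g t‖ :=
    ((isEquivalent_linearizeBelow htop (a i)).trans_isLittleO hg).trans_isTheta hone.symm
  refine (isLittleO_tsum hε ?_ hterm).trans_isTheta hone
  filter_upwards [eventually_ge_atTop 0] with t ht i
  rw [Real.norm_of_nonneg ((hω.isConcaveExpConvex_linearizeBelow (ha i)).nonneg ht),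
    Real.norm_of_nonneg (by positivity)]
  exact hbound i t ht

end Sum

theorem statement17_general {E : Type*} [SeminormedAddCommGroup E] {ω : ℝ → ℝ}
    (hω : IsConcaveExpConvex ω) (hlit : ω =o[atTop] fun t : ℝ => t)
    (hlog : (fun t => Real.log t) =o[atTop] ω) (hnq : NonQuasianalyticW ω) {f : ℝ → E}
    (hof : ω =o[atTop] f) :
    ∃ ωt : ℝ → ℝ, IsWeightFunction ωt ∧ NonQuasianalyticW ωt ∧
      ConcaveOn ℝ (Ici 0) ωt ∧ ω =o[atTop] ωt ∧ ωt =o[atTop] f := by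
  obtain ⟨a, ha, hid, hf, hint⟩ :=
    hω.exists_seq_linearizeBelow_le hlit hnq hof (ε := fun n => (1 / 2) ^ n) fun n => by positivity
  have hε : Summable fun n : ℕ => (1 / 2 : ℝ) ^ n := summable_geometric_two
  have hterm (n : ℕ) := hω.isConcaveExpConvex_linearizeBelow (ha n)
  have hsum (t : ℝ) (ht : 0 ≤ t) : Summable fun n => linearizeBelow ω (a n) t :=
    .of_nonneg_of_le (fun n => (hterm n).nonneg ht) (fun n => hid n t ht) (hε.mul_right _)
  have htop : Tendsto (fun t => ‖ω t‖) atTop atTop :=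
    hlog.isBigO.trans_tendsto_norm_atTop (tendsto_norm_atTop_atTop.comp Real.tendsto_log_atTop)
  have hωt := IsConcaveExpConvex.tsum hterm hsum
  have hdominates : ω =o[atTop] fun t => ∑' n, linearizeBelow ω (a n) t :=
    isLittleO_tsum_of_isEquivalent (fun n => isEquivalent_linearizeBelow htop (a n))
      ((eventually_ge_atTop 0).mono fun t ht n => (hterm n).nonneg ht)
      ((eventually_ge_atTop 0).mono hsum)
  refine ⟨_, hωt.isWeightFunction (continuousAt_tsum_linearizeBelow_zero ha).continuousWithinAt
      (isLittleO_tsum_linearizeBelow hω ha hε htop hlit hid) (hlog.trans hdominates),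
    nonQuasianalyticW_tsum (fun n t ht => (hterm n).nonneg (zero_le_one.trans ht))
      (fun n => hω.nonQuasianalyticW_linearizeBelow hnq (ha n)) hε hint,
    hωt.concaveOn, hdominates, isLittleO_tsum_linearizeBelow hω ha hε htop hof hf⟩

/-- for a non-quasianalytic concave weight function `ω` and any
`f : [0,∞) → [0,∞)` with `ω = o(f)`, there is a non-quasianalytic concave weight
function `ω̃` with `ω = o(ω̃)` and `ω̃ = o(f)` at `∞`. -/
theorem statement17 (ω : ℝ → ℝ) (hω : IsWeightFunction ω)
    (hnq : NonQuasianalyticW ω) (hconc : ConcaveOn ℝ (Ici 0) ω)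
    (f : ℝ → ℝ) (hf0 : ∀ t ∈ Ici (0 : ℝ), 0 ≤ f t) (hof : ω =o[atTop] f) :
    ∃ ωt : ℝ → ℝ, IsWeightFunction ωt ∧ NonQuasianalyticW ωt ∧
      ConcaveOn ℝ (Ici 0) ωt ∧ ω =o[atTop] ωt ∧ ωt =o[atTop] f :=
  let ⟨_, _, _, _, hlit, hlog, _⟩ := hω
  statement17_general (hω.isConcaveExpConvex hconc) hlit hlog hnq hof
end
end

section
/- Let M be a quasianalytic intersectable weight sequence. Then m_k^{1/k} → ∞ as k → ∞, and consequently for every N ∈ L(M) one has n_k^{1/k} → ∞ as k → ∞, where n_k := N_k/k!. -/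
open Filter Set Asymptotics MeasureTheory

noncomputable section

/-!
Let `N` be non-quasianalytic with `n_k = N_k / k!` log-convex, and let `μ_k = N_k / N_{k-1}`, so
that `μ_k / k` is increasing. Then `S = ∑ 1 / μ_j ≥ ∑_{j ≤ k} (1 / j) (k / μ_k) = k H_k / μ_k`,
where `H_k` is the `k`-th harmonic number. Hence `N_0 ∏_{j ≤ k} j H_j ≤ S ^ k N_k`: one and the same
sequence lies in `Λ^{N}` for all such `N`, and therefore in `Λ^{M}` if `M` is intersectable. Since
`H_k → ∞`, membership of this sequence in `Λ^{M}` forces `m_k ^ (1/k) → ∞`.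
-/

lemma rootTendsToInfty_iff_isBigO_pow {a : ℕ → ℝ} (ha : ∀ k, 0 ≤ a k) :
    RootTendsToInfty a ↔ ∀ B > (0 : ℝ), (fun k : ℕ => B ^ k) =O[atTop] a := by
  constructor
  · intro h B hB
    refine IsBigO.of_bound 1 ?_
    filter_upwards [h.eventually_ge_atTop B, eventually_ne_atTop 0] with k hBk hk
    rw [one_mul, Real.norm_of_nonneg (pow_nonneg hB.le k), Real.norm_of_nonneg (ha k)]
    calc B ^ k ≤ (a k ^ (1 / (k : ℝ))) ^ k := by gcongr
      _ = a k := by rw [one_div, Real.rpow_inv_natCast_pow (ha k) hk]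
  · refine fun h => tendsto_atTop.2 fun B₀ => ?_
    set B := max B₀ 1
    have hB : 0 < B := zero_lt_one.trans_le (le_max_right _ _)
    -- `2 ^ k` absorbs the implied constant of the `O`-bound for `2 * B`.
    obtain ⟨C, hC⟩ := (h (2 * B) (by positivity)).bound
    have hC_le := (tendsto_pow_atTop_atTop_of_one_lt one_lt_two).eventually_ge_atTop C
    filter_upwards [hC, hC_le, eventually_ne_atTop 0] with k hk hCk hk0
    rw [Real.norm_of_nonneg (by positivity), Real.norm_of_nonneg (ha k), mul_pow] at hk
    have pow_le : B ^ k ≤ a k := by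
      refine le_of_mul_le_mul_left (hk.trans ?_) (by positivity : (0 : ℝ) < 2 ^ k)
      exact mul_le_mul_of_nonneg_right hCk (ha k)
    calc B₀ ≤ B := le_max_left _ _
      _ = (B ^ k) ^ (1 / (k : ℝ)) := by rw [one_div, Real.pow_rpow_inv_natCast hB.le hk0]
      _ ≤ a k ^ (1 / (k : ℝ)) := by gcongr

lemma RootTendsToInfty.of_tendsto_div_succ {a : ℕ → ℝ} (ha : ∀ k, 0 < a k)
    (h : Tendsto (fun k => a (k + 1) / a k) atTop atTop) : RootTendsToInfty a := by
  rw [rootTendsToInfty_iff_isBigO_pow fun k => (ha k).le]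
  intro B hB
  obtain ⟨K, hK⟩ := eventually_atTop.1 (h.eventually_ge_atTop B)
  have pow_mul_le (j : ℕ) : B ^ j * a K ≤ a (K + j) :=
    geom_le hB.le (u := fun j => a (K + j)) j fun i _ =>
      (le_div_iff₀ (ha _)).1 (hK (K + i) (Nat.le_add_right K i))
  refine IsBigO.of_bound (B ^ K / a K) ?_
  filter_upwards [eventually_ge_atTop K] with k hk
  obtain ⟨j, rfl⟩ := Nat.exists_eq_add_of_le hk
  rw [Real.norm_of_nonneg (pow_nonneg hB.le _), Real.norm_of_nonneg (ha _).le]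
  calc B ^ (K + j) = B ^ K / a K * (B ^ j * a K) := by
        have := (ha K).ne'
        field_simp
        ring
    _ ≤ B ^ K / a K * a (K + j) :=
        mul_le_mul_of_nonneg_left (pow_mul_le j) (div_pos (pow_pos hB K) (ha K)).le

lemma RootTendsToInfty.of_isBigO_pow_mul {a b : ℕ → ℝ} {ρ : ℝ} (ha : ∀ k, 0 ≤ a k)
    (hb : ∀ k, 0 ≤ b k) (hρ : 0 < ρ) (hab : a =O[atTop] fun k => ρ ^ k * b k)
    (h : RootTendsToInfty a) : RootTendsToInfty b := by
  rw [rootTendsToInfty_iff_isBigO_pow ha] at h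
  rw [rootTendsToInfty_iff_isBigO_pow hb]
  intro B hB
  have pow_isBigO : (fun k : ℕ => (ρ * B) ^ k) =O[atTop] fun k => ρ ^ k * b k :=
    (h (ρ * B) (by positivity)).trans hab
  refine ((isBigO_refl (fun k : ℕ => (ρ ^ k)⁻¹) atTop).mul pow_isBigO).congr
    (fun k => ?_) fun k => ?_
  · rw [mul_pow, inv_mul_cancel_left₀ (by positivity)]
  · rw [inv_mul_cancel_left₀ (by positivity)]

lemma mseq_nonneg {M : ℕ → ℝ} (hM : ∀ k, 0 ≤ M k) (k : ℕ) : 0 ≤ mseq M k :=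
  div_nonneg (hM k) (Nat.cast_nonneg _)

lemma mseq_pos {M : ℕ → ℝ} (hM : ∀ k, 0 < M k) (k : ℕ) : 0 < mseq M k :=
  div_pos (hM k) (Nat.cast_pos.2 k.factorial_pos)

lemma mseq_succ_div_mseq (M : ℕ → ℝ) (k : ℕ) :
    mseq M (k + 1) / mseq M k = M (k + 1) / M k / (k + 1) := by
  have : (k.factorial : ℝ) ≠ 0 := Nat.cast_ne_zero.2 k.factorial_ne_zero
  simp only [mseq, Nat.factorial_succ, Nat.cast_mul, Nat.cast_succ]
  field_simp

lemma RootTendsToInfty.mseq_of_mem_Lambda {A M : ℕ → ℝ} (hA : ∀ k, 0 ≤ A k) (hM : ∀ k, 0 ≤ M k)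
    (hAM : (fun k => (A k : ℂ)) ∈ Lambda M) (h : RootTendsToInfty (mseq A)) :
    RootTendsToInfty (mseq M) := by
  obtain ⟨ρ, hρ, C, hC⟩ := hAM
  refine h.of_isBigO_pow_mul (mseq_nonneg hA) (mseq_nonneg hM) hρ ?_
  refine IsBigO.of_bound C (Eventually.of_forall fun k => ?_)
  have hm : 0 ≤ ρ ^ k * mseq M k := mul_nonneg (by positivity) (mseq_nonneg hM k)
  rw [Real.norm_of_nonneg (mseq_nonneg hA k), Real.norm_of_nonneg hm]
  calc mseq A k ≤ C * ρ ^ k * M k / k.factorial := by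
        unfold mseq
        gcongr
        simpa [abs_of_nonneg (hA k)] using hC k
    _ = C * (ρ ^ k * mseq M k) := by
        unfold mseq
        ring

lemma LogConvexSeq.monotone_div_succ {m : ℕ → ℝ} (hm : LogConvexSeq m) (hpos : ∀ k, 0 < m k) :
    Monotone fun k => m (k + 1) / m k := by
  refine monotone_nat_of_le_succ fun k => ?_
  rw [div_le_div_iff₀ (hpos _) (hpos _), ← sq, mul_comm]
  exact hm (k + 1) (Nat.le_add_left 1 k)

/-- The sequence `∏_{j=1}^k j H_j`, where `H_j` is the `j`-th harmonic number. It belongs to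
`Λ^{N}` for every non-quasianalytic `N` with log-convex `N / k!`. -/
def harmonicWeight (k : ℕ) : ℝ := ∏ j ∈ Finset.range k, ((j + 1 : ℝ) * harmonic (j + 1))

lemma harmonicWeight_succ (k : ℕ) :
    harmonicWeight (k + 1) = harmonicWeight k * ((k + 1) * harmonic (k + 1)) :=
  Finset.prod_range_succ _ k

lemma harmonicWeight_pos (k : ℕ) : 0 < harmonicWeight k :=
  Finset.prod_pos fun j _ => mul_pos j.cast_add_one_pos (mod_cast harmonic_pos j.succ_ne_zero)

lemma tendsto_harmonic_atTop : Tendsto (fun k => (harmonic k : ℝ)) atTop atTop := by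
  refine tendsto_atTop_mono log_add_one_le_harmonic ?_
  exact_mod_cast (Real.tendsto_log_atTop.comp tendsto_natCast_atTop_atTop).comp
    (tendsto_add_atTop_nat 1)

lemma rootTendsToInfty_mseq_harmonicWeight : RootTendsToInfty (mseq harmonicWeight) := by
  refine .of_tendsto_div_succ (mseq_pos harmonicWeight_pos) ?_
  refine (tendsto_harmonic_atTop.comp (tendsto_add_atTop_nat 1)).congr fun k => ?_
  rw [mseq_succ_div_mseq, harmonicWeight_succ, mul_div_cancel_left₀ _ (harmonicWeight_pos k).ne',
    mul_div_cancel_left₀ _ k.cast_add_one_ne_zero, Function.comp_apply]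

lemma succ_mul_harmonic_succ_le_tsum_mul {N : ℕ → ℝ} (hpos : ∀ k, 0 < N k) (hN : NonQuasianalytic N)
    (hlc : LogConvexSeq (mseq N)) (k : ℕ) :
    (k + 1) * (harmonic (k + 1) : ℝ) ≤ (∑' j, N j / N (j + 1)) * (N (k + 1) / N k) := by
  set μ : ℕ → ℝ := fun j => N (j + 1) / N j
  have hμ (j : ℕ) : 0 < μ j := div_pos (hpos _) (hpos j)
  have hμ_inv (j : ℕ) : N j / N (j + 1) = (μ j)⁻¹ := (inv_div _ _).symm
  have μ_div_mono : Monotone fun j : ℕ => μ j / (j + 1) := by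
    simpa only [mseq_succ_div_mseq] using hlc.monotone_div_succ (mseq_pos hpos)
  have term_le (j : ℕ) (hj : j ∈ Finset.range (k + 1)) :
      (k + 1) * ((j : ℝ) + 1)⁻¹ ≤ (μ j)⁻¹ * μ k := by
    have hjk := μ_div_mono (Finset.mem_range_succ_iff.1 hj)
    rw [div_le_div_iff₀ (by positivity) (by positivity)] at hjk
    rw [← div_eq_mul_inv, inv_mul_eq_div, div_le_div_iff₀ (by positivity) (hμ j)]
    linarith
  calc (k + 1) * (harmonic (k + 1) : ℝ)
      = ∑ j ∈ Finset.range (k + 1), (k + 1) * ((j : ℝ) + 1)⁻¹ := by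
        simp only [harmonic, Rat.cast_sum, Rat.cast_inv, Rat.cast_natCast, Nat.cast_succ,
          Rat.cast_add, Rat.cast_one, Finset.mul_sum]
    _ ≤ (∑ j ∈ Finset.range (k + 1), N j / N (j + 1)) * μ k := by
        simp only [hμ_inv, Finset.sum_mul]
        exact Finset.sum_le_sum term_le
    _ ≤ (∑' j, N j / N (j + 1)) * μ k := by
        refine mul_le_mul_of_nonneg_right (hN.sum_le_tsum _ fun j _ => ?_) (hμ k).le
        exact (div_pos (hpos j) (hpos _)).le

lemma harmonicWeight_mem_Lambda {N : ℕ → ℝ} (hpos : ∀ k, 0 < N k) (hN : NonQuasianalytic N)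
    (hlc : LogConvexSeq (mseq N)) : (fun k => (harmonicWeight k : ℂ)) ∈ Lambda N := by
  have hterm (j : ℕ) : 0 < N j / N (j + 1) := div_pos (hpos j) (hpos _)
  refine ⟨∑' j, N j / N (j + 1), hN.tsum_pos (fun j => (hterm j).le) 0 (hterm 0), (N 0)⁻¹,
    fun k => ?_⟩
  have prod_div_succ : ∏ j ∈ Finset.range k, N (j + 1) / N j = N k / N 0 := by
    refine Finset.prod_range_induction _ (fun j => N j / N 0) (div_self (hpos 0).ne') k
      fun j _ => ?_
    rw [mul_comm, div_mul_div_cancel₀ (hpos j).ne']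
  rw [Complex.norm_real, Real.norm_of_nonneg (harmonicWeight_pos k).le]
  calc harmonicWeight k
      ≤ ∏ j ∈ Finset.range k, (∑' i, N i / N (i + 1)) * (N (j + 1) / N j) := by
        refine Finset.prod_le_prod (fun j _ => ?_) fun j _ =>
          succ_mul_harmonic_succ_le_tsum_mul hpos hN hlc j
        exact mul_nonneg j.cast_add_one_pos.le (mod_cast (harmonic_pos j.succ_ne_zero).le)
    _ = (N 0)⁻¹ * (∑' i, N i / N (i + 1)) ^ k * N k := by
        rw [Finset.prod_mul_distrib, Finset.prod_const, Finset.card_range, prod_div_succ]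
        ring

lemma harmonicWeight_mem_iInter_Lambda (M : ℕ → ℝ) :
    (fun k => (harmonicWeight k : ℂ)) ∈ ⋂ N ∈ LM M, Lambda N :=
  mem_iInter₂.2 fun _ hN => harmonicWeight_mem_Lambda hN.1.2.1 hN.2.1 hN.2.2.2

lemma rootTendsToInfty_mseq_of_harmonicWeight_mem {M : ℕ → ℝ} (hM : ∀ k, 0 ≤ M k)
    (h : (fun k => (harmonicWeight k : ℂ)) ∈ Lambda M) : RootTendsToInfty (mseq M) :=
  rootTendsToInfty_mseq_harmonicWeight.mseq_of_mem_Lambda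
    (fun k => (harmonicWeight_pos k).le) hM h

theorem statement18_general (M : ℕ → ℝ) (hM : ∀ k, 0 ≤ M k) (hint : Intersectable M) :
    RootTendsToInfty (mseq M) ∧ ∀ N ∈ LM M, RootTendsToInfty (mseq N) := by
  have hmem := harmonicWeight_mem_iInter_Lambda M
  refine ⟨rootTendsToInfty_mseq_of_harmonicWeight_mem hM (hint ▸ hmem), fun N hN => ?_⟩
  exact rootTendsToInfty_mseq_of_harmonicWeight_mem (fun k => (hN.1.2.1 k).le)
    (mem_iInter₂.1 hmem N hN)

/-- a quasianalytic intersectable weight sequence `M` satisfies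
`m_k^{1/k} → ∞`, and every `N ∈ L(M)` satisfies `n_k^{1/k} → ∞`. -/
theorem statement18 (M : ℕ → ℝ) (hM : IsWeightSeq M) (hq : Quasianalytic M)
    (hint : Intersectable M) :
    RootTendsToInfty (mseq M) ∧ ∀ N ∈ LM M, RootTendsToInfty (mseq N) :=
  statement18_general M (fun k => (hM.2.1 k).le) hint
end
end

section
/- Let M be a quasianalytic intersectable weight sequence of moderate growth. Then for every N ∈ L(M) there exists N' ∈ L(M) such that mg(N',N) < ∞. -/
open Filter Set Asymptotics MeasureTheory

noncomputable section

/-! Given `N ∈ L(M)` with `n k = N k / k!`, put `N' k = k! * a ^ k * n ⌊k/2⌋ * n ⌈k/2⌉`, that is,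
`N' k = a ^ k * (k choose ⌊k/2⌋) * N ⌊k/2⌋ * N ⌈k/2⌉`, where `a ≥ 1` satisfies
`M (i + j) ≤ a ^ (i + j) * M i * M j`. Splitting `k = ⌊k/2⌋ + ⌈k/2⌉` yields `M ≤ N'`.
Log-convexity of `N` makes `N i * N j`, for fixed `i + j`, smallest at the balanced pair, and the
binomial coefficient is at most `2 ^ k`, so `mg (N', N) ≤ 2 * a`. Finally `N' k / N' (k + 1)` is at
most `N ⌊k/2⌋ / N (⌊k/2⌋ + 1)`, so `N'` is again non-quasianalytic. -/

section LogConvex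

variable {m n : ℕ → ℝ}

theorem logConvexSeq_pow (a : ℝ) : LogConvexSeq fun k => a ^ k := by
  intro k hk
  rw [← pow_mul, ← pow_add, show k * 2 = k - 1 + (k + 1) by omega]

theorem logConvexSeq_factorial : LogConvexSeq fun k => (k.factorial : ℝ) := by
  intro k hk
  obtain ⟨i, rfl⟩ := Nat.exists_eq_add_of_le' hk
  have h : (i + 1).factorial ^ 2 ≤ i.factorial * (i + 1 + 1).factorial :=
    calc (i + 1).factorial ^ 2 = i.factorial * ((i + 1) * (i + 1).factorial) := by
          rw [sq, Nat.factorial_succ i]; ring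
      _ ≤ i.factorial * ((i + 1 + 1) * (i + 1).factorial) := by gcongr; omega
  simp only [Nat.add_sub_cancel]
  exact_mod_cast h

theorem LogConvexSeq.mul (hm : LogConvexSeq m) (hn : LogConvexSeq n) (hm₀ : ∀ k, 0 ≤ m k) :
    LogConvexSeq fun k => m k * n k := by
  intro k hk
  calc (m k * n k) ^ 2 = m k ^ 2 * n k ^ 2 := mul_pow ..
    _ ≤ m (k - 1) * m (k + 1) * (n (k - 1) * n (k + 1)) :=
        mul_le_mul (hm k hk) (hn k hk) (sq_nonneg _) (mul_nonneg (hm₀ _) (hm₀ _))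
    _ = m (k - 1) * n (k - 1) * (m (k + 1) * n (k + 1)) := mul_mul_mul_comm ..

theorem LogConvexSeq.monotone_ratio (hm : LogConvexSeq m) (hpos : ∀ k, 0 < m k) :
    Monotone fun k => m (k + 1) / m k := by
  refine monotone_nat_of_le_succ fun k => ?_
  rw [div_le_div_iff₀ (hpos _) (hpos _), ← sq, mul_comm (m (k + 1 + 1))]
  exact hm (k + 1) k.succ_pos

theorem LogConvexSeq.succ_mul_le_mul_succ (hm : LogConvexSeq m) (hpos : ∀ k, 0 < m k)
    {i j : ℕ} (hij : i ≤ j) : m (i + 1) * m j ≤ m i * m (j + 1) := by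
  have h := hm.monotone_ratio hpos hij
  rwa [div_le_div_iff₀ (hpos _) (hpos _), mul_comm (m (j + 1))] at h

end LogConvex

/-- The sequence `k ↦ m ⌊k/2⌋ * m ⌈k/2⌉`. For a positive log-convex `m` its value at `k` is
the minimum of `m i * m j` over `i + j = k`. -/
def balancedSquare (m : ℕ → ℝ) : ℕ → ℝ := fun k => m (k / 2) * m ((k + 1) / 2)

section BalancedSquare

variable {m : ℕ → ℝ}

theorem balancedSquare_succ (m : ℕ → ℝ) (k : ℕ) :
    balancedSquare m (k + 1) = m ((k + 1) / 2) * m (k / 2 + 1) := by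
  rw [balancedSquare, show (k + 1 + 1) / 2 = k / 2 + 1 by omega]

theorem balancedSquare_pos (hpos : ∀ k, 0 < m k) (k : ℕ) : 0 < balancedSquare m k :=
  mul_pos (hpos _) (hpos _)

theorem balancedSquare_div_succ (hne : ∀ k, m k ≠ 0) (k : ℕ) :
    balancedSquare m k / balancedSquare m (k + 1) = m (k / 2) / m (k / 2 + 1) := by
  rw [balancedSquare_succ, balancedSquare, mul_comm (m (k / 2)), mul_div_mul_left _ _ (hne _)]

protected theorem LogConvexSeq.balancedSquare (hm : LogConvexSeq m) (hpos : ∀ k, 0 < m k) :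
    LogConvexSeq (balancedSquare m) := by
  intro k hk
  obtain ⟨i, rfl⟩ := Nat.exists_eq_add_of_le' hk
  have hswap : m (i / 2 + 1) * m ((i + 1) / 2) ≤ m (i / 2) * m ((i + 1) / 2 + 1) :=
    hm.succ_mul_le_mul_succ hpos (by omega)
  have hnonneg : 0 ≤ m ((i + 1) / 2) * m (i / 2 + 1) := (mul_pos (hpos _) (hpos _)).le
  rw [Nat.add_sub_cancel, balancedSquare_succ m (i + 1), balancedSquare_succ m i,
    show (i + 1 + 1) / 2 = i / 2 + 1 by omega]
  calc (m ((i + 1) / 2) * m (i / 2 + 1)) ^ 2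
      = m ((i + 1) / 2) * m (i / 2 + 1) * (m (i / 2 + 1) * m ((i + 1) / 2)) := by ring
    _ ≤ m ((i + 1) / 2) * m (i / 2 + 1) * (m (i / 2) * m ((i + 1) / 2 + 1)) := by gcongr
    _ = m (i / 2) * m ((i + 1) / 2) * (m (i / 2 + 1) * m ((i + 1) / 2 + 1)) := by ring

theorem LogConvexSeq.balancedSquare_add_le (hm : LogConvexSeq m) (hpos : ∀ k, 0 < m k)
    (j k : ℕ) : balancedSquare m (j + k) ≤ m j * m k := by
  wlog hjk : j ≤ k generalizing j k
  · rw [add_comm, mul_comm]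
    exact this k j (le_of_not_ge hjk)
  obtain ⟨d, rfl⟩ := Nat.exists_eq_add_of_le hjk
  clear hjk
  induction d using Nat.twoStepInduction generalizing j with
  | zero => rw [balancedSquare, show (j + (j + 0)) / 2 = j by omega,
      show (j + (j + 0) + 1) / 2 = j + 0 by omega]
  | one => rw [balancedSquare, show (j + (j + 1)) / 2 = j by omega,
      show (j + (j + 1) + 1) / 2 = j + 1 by omega]
  | more d ih _ =>
    calc balancedSquare m (j + (j + (d + 2))) = balancedSquare m (j + 1 + (j + 1 + d)) := by
          congr 1; ring
      _ ≤ m (j + 1) * m (j + 1 + d) := ih (j + 1)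
      _ ≤ m j * m (j + 1 + d + 1) := hm.succ_mul_le_mul_succ hpos (by omega)
      _ = m j * m (j + (d + 2)) := by congr 2; ring

end BalancedSquare

section RootGrowth

variable {m n : ℕ → ℝ}

theorem rootTendsToInfty_iff_eventually_pow_le (hm : ∀ k, 0 ≤ m k) :
    RootTendsToInfty m ↔ ∀ R, 0 ≤ R → ∀ᶠ k in atTop, R ^ k ≤ m k := by
  have hroot {R : ℝ} (hR : 0 ≤ R) {k : ℕ} (hk : 0 < k) :
      R ≤ m k ^ (1 / (k : ℝ)) ↔ R ^ k ≤ m k := by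
    rw [one_div, Real.le_rpow_inv_iff_of_pos hR (hm k) (by exact_mod_cast hk), Real.rpow_natCast]
  rw [RootTendsToInfty, tendsto_atTop]
  constructor
  · intro h R hR
    filter_upwards [h R, eventually_gt_atTop 0] with k hk hk₀ using (hroot hR hk₀).1 hk
  · intro h R
    filter_upwards [h _ (le_max_right R 0), eventually_gt_atTop 0] with k hk hk₀
    exact (le_max_left R 0).trans ((hroot (le_max_right R 0) hk₀).2 hk)

theorem RootTendsToInfty.mono (hm : RootTendsToInfty m) (hm₀ : ∀ k, 0 ≤ m k)
    (hmn : ∀ k, m k ≤ n k) : RootTendsToInfty n :=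
  tendsto_atTop_mono (fun k => Real.rpow_le_rpow (hm₀ k) (hmn k) (by positivity)) hm

protected theorem RootTendsToInfty.balancedSquare (hm : RootTendsToInfty m) (hpos : ∀ k, 0 < m k) :
    RootTendsToInfty (balancedSquare m) := by
  rw [rootTendsToInfty_iff_eventually_pow_le fun k => (balancedSquare_pos hpos k).le]
  intro R hR
  have hpow := (rootTendsToInfty_iff_eventually_pow_le fun k => (hpos k).le).1 hm R hR
  have hfloor : Tendsto (fun k : ℕ => k / 2) atTop atTop := Nat.tendsto_div_const_atTop two_ne_zero
  have hceil : Tendsto (fun k : ℕ => (k + 1) / 2) atTop atTop :=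
    hfloor.comp (tendsto_add_atTop_nat 1)
  filter_upwards [hfloor.eventually hpow, hceil.eventually hpow] with k hk₁ hk₂
  calc R ^ k = R ^ (k / 2) * R ^ ((k + 1) / 2) := by rw [← pow_add]; congr 1; omega
    _ ≤ m (k / 2) * m ((k + 1) / 2) := mul_le_mul hk₁ hk₂ (pow_nonneg hR _) (hpos _).le

end RootGrowth

theorem summable_comp_half {f : ℕ → ℝ} (hf : Summable f) : Summable fun k => f (k / 2) := by
  have heven : Summable fun k => f (2 * k / 2) := by simpa using hf
  have hodd : Summable fun k => f ((2 * k + 1) / 2) := by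
    simpa only [show ∀ k, (2 * k + 1) / 2 = k by omega] using hf
  exact (heven.hasSum.even_add_odd (f := fun k => f (k / 2)) hodd.hasSum).summable

theorem ModerateGrowth.le_pow_mul_balancedSquare {M N : ℕ → ℝ} (hmg : ModerateGrowth M)
    (hM : ∀ k, 0 ≤ M k) (hMN : ∀ k, M k ≤ N k) :
    ∃ a : ℝ, 1 ≤ a ∧ ∀ k, M k ≤ a ^ k * balancedSquare N k := by
  obtain ⟨C, hC, hMC⟩ := hmg
  refine ⟨max C 1, le_max_right _ _, fun k => ?_⟩
  have hle : M (k / 2) * M ((k + 1) / 2) ≤ N (k / 2) * N ((k + 1) / 2) :=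
    mul_le_mul (hMN _) (hMN _) (hM _) ((hM _).trans (hMN _))
  calc M k = M (k / 2 + (k + 1) / 2) := by congr 1; omega
    _ ≤ C ^ (k / 2 + (k + 1) / 2) * M (k / 2) * M ((k + 1) / 2) := hMC _ _
    _ = C ^ k * (M (k / 2) * M ((k + 1) / 2)) := by
        rw [mul_assoc, show k / 2 + (k + 1) / 2 = k by omega]
    _ ≤ max C 1 ^ k * (N (k / 2) * N ((k + 1) / 2)) :=
        mul_le_mul (pow_le_pow_left₀ hC.le (le_max_left _ _) k) hle
          (mul_nonneg (hM _) (hM _)) (by positivity)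

theorem mgFinite_of_le_pow_mul {M N : ℕ → ℝ} {H : ℝ} (hH : 0 ≤ H) (hM : ∀ k, 0 ≤ M k)
    (hN : ∀ k, 0 < N k) (h : ∀ j k, M (j + k) ≤ H ^ (j + k) * (N j * N k)) : MgFinite M N := by
  refine ⟨H, ?_⟩
  rintro _ ⟨j, k, hjk, rfl⟩
  have hNN : 0 < N j * N k := mul_pos (hN j) (hN k)
  calc (M (j + k) / (N j * N k)) ^ (1 / (j + k : ℝ))
      ≤ (H ^ (j + k)) ^ (1 / (j + k : ℝ)) :=
        Real.rpow_le_rpow (div_nonneg (hM _) hNN.le) ((div_le_iff₀ hNN).2 (h j k)) (by positivity)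
    _ = H := by
        rw [one_div, ← Nat.cast_add]
        exact Real.pow_rpow_inv_natCast hH (by omega)

theorem mseq_pos_s19 {N : ℕ → ℝ} (hN : ∀ k, 0 < N k) (k : ℕ) : 0 < mseq N k :=
  div_pos (hN k) (by positivity)

theorem LogConvexSeq.of_mseq {N : ℕ → ℝ} (hn : LogConvexSeq (mseq N)) : LogConvexSeq N := by
  have hN : N = fun k => (k.factorial : ℝ) * mseq N k := by
    funext k
    exact (mul_div_cancel₀ _ (by positivity)).symm
  rw [hN]
  exact logConvexSeq_factorial.mul hn fun k => k.factorial.cast_nonneg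

/-- The sequence `N'` of the theorem: `N' k / k! = a ^ k * n ⌊k/2⌋ * n ⌈k/2⌉`, where
`n k = N k / k!`. The balanced square is taken of `n` rather than of `N` so that `N' k / k!` is
again log-convex. -/
def balancedMajorant (a : ℝ) (N : ℕ → ℝ) : ℕ → ℝ :=
  fun k => (k.factorial : ℝ) * (a ^ k * balancedSquare (mseq N) k)

section BalancedMajorant

variable {a : ℝ} {N : ℕ → ℝ}

theorem mseq_balancedMajorant (a : ℝ) (N : ℕ → ℝ) :
    mseq (balancedMajorant a N) = fun k => a ^ k * balancedSquare (mseq N) k := by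
  funext k
  exact mul_div_cancel_left₀ _ (by positivity)

theorem balancedMajorant_eq_choose_mul (a : ℝ) (N : ℕ → ℝ) (k : ℕ) :
    balancedMajorant a N k = (k.choose (k / 2) : ℝ) * (a ^ k * balancedSquare N k) := by
  rw [Nat.cast_choose ℝ (Nat.div_le_self k 2), show k - k / 2 = (k + 1) / 2 by omega]
  simp only [balancedMajorant, balancedSquare, mseq]
  ring

theorem balancedMajorant_pos (ha : 0 < a) (hN : ∀ k, 0 < N k) (k : ℕ) :
    0 < balancedMajorant a N k := by
  have := balancedSquare_pos (mseq_pos_s19 hN) k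
  unfold balancedMajorant
  positivity

theorem pow_mul_balancedSquare_le_balancedMajorant (ha : 0 ≤ a) (hN : ∀ k, 0 < N k) (k : ℕ) :
    a ^ k * balancedSquare N k ≤ balancedMajorant a N k := by
  have hchoose : (1 : ℝ) ≤ k.choose (k / 2) := by
    exact_mod_cast Nat.choose_pos (Nat.div_le_self k 2)
  rw [balancedMajorant_eq_choose_mul]
  exact le_mul_of_one_le_left (mul_nonneg (pow_nonneg ha k) (balancedSquare_pos hN k).le) hchoose

theorem logConvexSeq_mseq_balancedMajorant (ha : 0 ≤ a) (hN : ∀ k, 0 < N k)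
    (hn : LogConvexSeq (mseq N)) : LogConvexSeq (mseq (balancedMajorant a N)) := by
  rw [mseq_balancedMajorant]
  exact (logConvexSeq_pow a).mul (hn.balancedSquare (mseq_pos_s19 hN)) fun k => pow_nonneg ha k

theorem rootTendsToInfty_balancedMajorant (ha : 1 ≤ a) (hN : ∀ k, 0 < N k)
    (hroot : RootTendsToInfty N) : RootTendsToInfty (balancedMajorant a N) := by
  refine (hroot.balancedSquare hN).mono (fun k => (balancedSquare_pos hN k).le) fun k => ?_
  calc balancedSquare N k ≤ a ^ k * balancedSquare N k :=
        le_mul_of_one_le_left (balancedSquare_pos hN k).le (one_le_pow₀ ha)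
    _ ≤ balancedMajorant a N k :=
        pow_mul_balancedSquare_le_balancedMajorant (zero_le_one.trans ha) hN k

theorem balancedMajorant_div_succ_le (ha : 1 ≤ a) (hN : ∀ k, 0 < N k) (k : ℕ) :
    balancedMajorant a N k / balancedMajorant a N (k + 1) ≤ N (k / 2) / N (k / 2 + 1) := by
  have : 0 < a := zero_lt_one.trans_le ha
  have hratio : 0 < N (k / 2) / N (k / 2 + 1) := div_pos (hN _) (hN _)
  have hhalf : ((k / 2 : ℕ) : ℝ) + 1 ≤ a * (k + 1) :=
    calc ((k / 2 : ℕ) : ℝ) + 1 ≤ k + 1 := by gcongr; exact Nat.div_le_self k 2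
      _ ≤ a * (k + 1) := le_mul_of_one_le_left (by positivity) ha
  calc balancedMajorant a N k / balancedMajorant a N (k + 1)
      = balancedSquare (mseq N) k / balancedSquare (mseq N) (k + 1) / (a * (k + 1)) := by
        simp only [balancedMajorant, Nat.factorial_succ, pow_succ]
        push_cast
        field_simp
    _ = mseq N (k / 2) / mseq N (k / 2 + 1) / (a * (k + 1)) := by
        rw [balancedSquare_div_succ fun k => (mseq_pos_s19 hN k).ne']
    _ = N (k / 2) / N (k / 2 + 1) * ((((k / 2 : ℕ) : ℝ) + 1) / (a * (k + 1))) := by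
        simp only [mseq, Nat.factorial_succ]
        push_cast
        field_simp
    _ ≤ N (k / 2) / N (k / 2 + 1) :=
        mul_le_of_le_one_right hratio.le (div_le_one_of_le₀ hhalf (by positivity))

protected theorem NonQuasianalytic.balancedMajorant (hN : NonQuasianalytic N) (ha : 1 ≤ a)
    (hpos : ∀ k, 0 < N k) : NonQuasianalytic (balancedMajorant a N) := by
  have hpos' := balancedMajorant_pos (zero_lt_one.trans_le ha) hpos
  exact (summable_comp_half hN).of_nonneg_of_le
    (fun k => (div_pos (hpos' k) (hpos' (k + 1))).le) (balancedMajorant_div_succ_le ha hpos)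

theorem isWeightSeq_balancedMajorant (ha : 1 ≤ a) (hN : IsWeightSeq N)
    (hn : LogConvexSeq (mseq N)) : IsWeightSeq (balancedMajorant a N) := by
  obtain ⟨hN₀, hpos, hN₁, -, hroot⟩ := hN
  have ha₀ : 0 < a := zero_lt_one.trans_le ha
  refine ⟨?_, balancedMajorant_pos ha₀ hpos, ?_,
    (logConvexSeq_mseq_balancedMajorant ha₀.le hpos hn).of_mseq,
    rootTendsToInfty_balancedMajorant ha hpos hroot⟩
  · simp [balancedMajorant_eq_choose_mul, balancedSquare, hN₀]
  · simpa [balancedMajorant_eq_choose_mul, balancedSquare, hN₀] using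
      one_le_mul_of_one_le_of_one_le ha hN₁

theorem mgFinite_balancedMajorant (ha : 0 < a) (hpos : ∀ k, 0 < N k) (hN : LogConvexSeq N) :
    MgFinite (balancedMajorant a N) N := by
  refine mgFinite_of_le_pow_mul (H := 2 * a) (by positivity)
    (fun k => (balancedMajorant_pos ha hpos k).le) hpos fun j k => ?_
  have hchoose : ((j + k).choose ((j + k) / 2) : ℝ) ≤ 2 ^ (j + k) := by
    exact_mod_cast Nat.choose_le_two_pow (j + k) ((j + k) / 2)
  have hbalanced : balancedSquare N (j + k) ≤ N j * N k := hN.balancedSquare_add_le hpos j k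
  have hnonneg : 0 ≤ balancedSquare N (j + k) := (balancedSquare_pos hpos _).le
  calc balancedMajorant a N (j + k)
      = (j + k).choose ((j + k) / 2) * (a ^ (j + k) * balancedSquare N (j + k)) :=
        balancedMajorant_eq_choose_mul a N (j + k)
    _ ≤ 2 ^ (j + k) * (a ^ (j + k) * (N j * N k)) := by gcongr
    _ = (2 * a) ^ (j + k) * (N j * N k) := by rw [mul_pow, mul_assoc]

end BalancedMajorant

theorem statement19_general (M : ℕ → ℝ) (hM : ∀ k, 0 ≤ M k) (hmg : ModerateGrowth M) :
    ∀ N ∈ LM M, ∃ N' ∈ LM M, MgFinite N' N := by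
  rintro N ⟨hNw, hNq, hMN, hn⟩
  have hpos : ∀ k, 0 < N k := hNw.2.1
  obtain ⟨a, ha, hMa⟩ := hmg.le_pow_mul_balancedSquare hM hMN
  have ha₀ : 0 < a := zero_lt_one.trans_le ha
  have hle : ∀ k, M k ≤ balancedMajorant a N k := fun k =>
    (hMa k).trans (pow_mul_balancedSquare_le_balancedMajorant ha₀.le hpos k)
  exact ⟨balancedMajorant a N,
    ⟨isWeightSeq_balancedMajorant ha hNw hn, hNq.balancedMajorant ha hpos, hle,
      logConvexSeq_mseq_balancedMajorant ha₀.le hpos hn⟩,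
    mgFinite_balancedMajorant ha₀ hpos hn.of_mseq⟩

/-- for a quasianalytic intersectable weight sequence `M` of moderate
growth, every `N ∈ L(M)` admits `N' ∈ L(M)` with `mg (N', N) < ∞`. -/
theorem statement19 (M : ℕ → ℝ) (hM : IsWeightSeq M) (hq : Quasianalytic M)
    (hint : Intersectable M) (hmg : ModerateGrowth M) :
    ∀ N ∈ LM M, ∃ N' ∈ LM M, MgFinite N' N :=
  statement19_general M (fun k => (hM.2.1 k).le) hmg
end
end
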